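/- For every integer r ≥ 1 and every natural number N there exists a finite connected simple graph G that is 3-regular (cubic), 2-connected, has more than N vertices, and contains at least 2^r distinct Šoltés vertices. Consequently, for every r ≥ 1 there exist infinitely many cubic 2-connected graphs with at least 2^r Šoltés vertices. -/

import Mathlib

open SimpleGraph Finset

/-- A `Fintype` instance for the vertex set of a vertex-deleted subgraph. -/
noncomputable instance instFintypeNe {V : Type*} [Fintype V] (v : V) :
    Fintype {u : V // u ≠ v} :=
  (Set.toFinite {u : V | u ≠ v}).fintype

/-- The graph obtained from `G` by deleting the vertex `v` (an induced subgraph). -/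
def deleteVertex {V : Type*} (G : SimpleGraph V) (v : V) :
    SimpleGraph {u : V // u ≠ v} :=
  G.induce {u : V | u ≠ v}

/-- The Wiener index of a finite simple graph: the sum of distances over all
unordered pairs of vertices. -/
noncomputable def wiener {V : Type*} [Fintype V] (G : SimpleGraph V) : ℕ :=
  (∑ u : V, ∑ v : V, G.dist u v) / 2

/-- `v` is a Šoltés vertex of `G` if `G - v` is connected and has the same Wiener index. -/
def IsSoltes {V : Type*} [Fintype V] (G : SimpleGraph V) (v : V) : Prop :=
  (deleteVertex G v).Connected ∧ wiener (deleteVertex G v) = wiener G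

/-- A graph is cubic (3-regular) if every vertex has exactly 3 neighbours. -/
def IsCubic {V : Type*} (G : SimpleGraph V) : Prop :=
  ∀ v : V, (G.neighborSet v).ncard = 3

/-- A finite graph is 2-connected if it is connected, has at least 3 vertices,
and stays connected after deleting any one vertex. -/
def TwoConnected {V : Type*} [Fintype V] (G : SimpleGraph V) : Prop :=
  G.Connected ∧ 3 ≤ Fintype.card V ∧ ∀ v : V, (deleteVertex G v).Connected

/-!
Let `H` be a graph with twins `x` and `y`, that is, two vertices with the same neighbours, and join
it by the edges `xs` and `yt` to a graph `K`, the tail. Deleting a vertex `v` of `H` lengthens the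
way from any other vertex `c` to the tail by `d_{H - v}(c, x) - d_H(c, x)`, whichever of the twins
it leads through. Summing over `c` gives the detour caused by `v`, and `v` leaves the Wiener index
of the glued graph unchanged exactly if
`W(H - v) + |K| * detour = W(H) + |K| * (1 + d(v, x)) + ∑ τ, min (d(s, τ)) (d(t, τ))`.

Now let `H` consist of two binary trees whose corresponding leaves are joined by long ladders. If
`v` is a leaf, the vertices of its ladder that are close to `v` have to leave it at the far end
once `v` is deleted, so the detour grows quadratically in the length of the ladders, while `H`
grows only linearly. Hence the left-hand side dominates for tails of moderate length, but the last
sum is quadratic in the length of the tail, so that the balance can be met by choosing this length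
and then moving two extra vertices along the tail. The automorphisms of the trees carry the one
Šoltés leaf to all `2 ^ r` of them.
-/

/-! ### Distances and the Wiener index -/

section Distance

variable {V W : Type*} {G : SimpleGraph V} {G' : SimpleGraph W}

theorem dist_le_dist_add_one_of_adj {a b : V} (h : G.Adj a b) (u : V) :
    G.dist u b ≤ G.dist u a + 1 := by
  have := h.diff_dist_adj (u := u)
  lia

theorem exists_adj_dist_add_one_eq {u w : V} (h : G.Reachable u w) (hne : u ≠ w) :
    ∃ w', G.Adj w w' ∧ G.dist u w' + 1 = G.dist u w := by
  obtain ⟨p, hp⟩ := h.symm.exists_walk_length_eq_dist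
  cases p with
  | nil => exact absurd rfl hne
  | @cons _ w' _ hadj p =>
    refine ⟨w', hadj, (dist_le_dist_add_one_of_adj hadj.symm u).antisymm' ?_⟩
    rw [dist_comm, dist_comm (u := u), ← hp, Walk.length_cons]
    exact Nat.succ_le_succ (dist_le p)

theorem le_add_dist_of_forall_adj_le_add_one {f : V → ℕ}
    (hf : ∀ a b, G.Adj a b → f b ≤ f a + 1) {u w : V} (h : G.Reachable u w) :
    f w ≤ f u + G.dist u w := by
  obtain ⟨p, hp⟩ := h.exists_walk_length_eq_dist
  rw [← hp]
  clear hp h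
  induction p with
  | nil => simp
  | cons hadj p ih =>
    have := hf _ _ hadj
    rw [Walk.length_cons]
    lia

theorem exists_walk_to_zero_of_descent {f : V → ℕ}
    (hf : ∀ w, f w ≠ 0 → ∃ w', G.Adj w w' ∧ f w' + 1 = f w) (w : V) :
    ∃ z, f z = 0 ∧ ∃ p : G.Walk w z, p.length = f w := by
  induction hn : f w generalizing w with
  | zero => exact ⟨w, hn, .nil, rfl⟩
  | succ n ih =>
    obtain ⟨w', hadj, hw'⟩ := hf w (by lia)
    obtain ⟨z, hz, p, hp⟩ := ih w' (by lia)
    exact ⟨z, hz, .cons hadj p, by rw [Walk.length_cons, hp]⟩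

theorem min_dist_eq_of_potential {f : V → ℕ} {s t : V} (hG : G.Connected)
    (hzero : ∀ w, f w = 0 ↔ w = s ∨ w = t) (hup : ∀ a b, G.Adj a b → f b ≤ f a + 1)
    (hdown : ∀ w, f w ≠ 0 → ∃ w', G.Adj w w' ∧ f w' + 1 = f w) (w : V) :
    min (G.dist s w) (G.dist t w) = f w := by
  have hs := le_add_dist_of_forall_adj_le_add_one hup (hG s w)
  have ht := le_add_dist_of_forall_adj_le_add_one hup (hG t w)
  rw [(hzero s).2 (.inl rfl)] at hs
  rw [(hzero t).2 (.inr rfl)] at ht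
  obtain ⟨z, hz, p, hp⟩ := exists_walk_to_zero_of_descent hdown w
  have hle := dist_le p
  rw [dist_comm] at hle
  obtain rfl | rfl := (hzero z).1 hz <;> lia

theorem dist_map_le (φ : G →g G') {a b : V} (h : G.Reachable a b) :
    G'.dist (φ a) (φ b) ≤ G.dist a b := by
  obtain ⟨p, hp⟩ := h.exists_walk_length_eq_dist
  rw [← hp, ← Walk.length_map φ]
  exact dist_le _

theorem dist_map_iso (φ : G ≃g G') (a b : V) : G'.dist (φ a) (φ b) = G.dist a b := by
  by_cases h : G.Reachable a b
  · refine (dist_map_le φ.toHom h).antisymm ?_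
    simpa using dist_map_le φ.symm.toHom (Iso.reachable_iff (φ := φ) |>.2 h)
  · rw [dist_eq_zero_of_not_reachable h,
      dist_eq_zero_of_not_reachable (mt Iso.reachable_iff.1 h)]

theorem dist_lt_card [Fintype V] (hG : G.Connected) (a b : V) :
    G.dist a b < Fintype.card V := by
  obtain ⟨p, hp, hlen⟩ := hG.exists_path_of_dist a b
  exact hlen ▸ hp.length_lt

end Distance

section Wiener

variable {V W : Type*} {G : SimpleGraph V} {G' : SimpleGraph W}

theorem even_sum_sum_dist [Fintype V] (G : SimpleGraph V) :
    Even (∑ u, ∑ v, G.dist u v) := by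
  rw [← Fintype.sum_prod_type', ← ZMod.natCast_eq_zero_iff_even, Nat.cast_sum]
  refine sum_involution (fun p _ ↦ p.swap) (fun p _ ↦ ?_) (fun p _ hp heq ↦ hp ?_)
    (fun _ _ ↦ mem_univ _) (fun p _ ↦ p.swap_swap)
  · rw [Prod.fst_swap, Prod.snd_swap, dist_comm, CharTwo.add_self_eq_zero]
  · rw [← congrArg Prod.fst heq, Prod.fst_swap, dist_self, Nat.cast_zero]

theorem two_mul_wiener [Fintype V] (G : SimpleGraph V) :
    2 * wiener G = ∑ u, ∑ v, G.dist u v :=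
  Nat.two_mul_div_two_of_even (even_sum_sum_dist G)

theorem wiener_congr [Fintype V] [Fintype W] (φ : G ≃g G') : wiener G = wiener G' := by
  rw [wiener, wiener, ← φ.toEquiv.sum_comp]
  simp_rw [← φ.toEquiv.sum_comp (G'.dist _)]
  exact congrArg (· / 2)
    (sum_congr rfl fun a _ ↦ sum_congr rfl fun b _ ↦ (dist_map_iso φ a b).symm)

/-- The isomorphism `G - v ≃g G' - φ v` induced by an isomorphism `φ : G ≃g G'`. -/
def deleteVertexIso (φ : G ≃g G') (v : V) : deleteVertex G v ≃g deleteVertex G' (φ v) where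
  toEquiv := φ.toEquiv.subtypeEquiv fun _ ↦ φ.injective.ne_iff.symm
  map_rel_iff' := φ.map_rel_iff'

theorem IsSoltes.iso [Fintype V] [Fintype W] (φ : G ≃g G') {v : V} (h : IsSoltes G v) :
    IsSoltes G' (φ v) :=
  ⟨(deleteVertexIso φ v).connected_iff.1 h.1, by
    rw [← wiener_congr (deleteVertexIso φ v), h.2, wiener_congr φ]⟩

theorem TwoConnected.iso [Fintype V] [Fintype W] (φ : G ≃g G') (h : TwoConnected G) :
    TwoConnected G' := by
  refine ⟨φ.connected_iff.1 h.1, Fintype.card_congr φ.toEquiv ▸ h.2.1, fun v ↦ ?_⟩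
  obtain ⟨u, rfl⟩ := φ.surjective v
  exact (deleteVertexIso φ u).connected_iff.1 (h.2.2 u)

theorem IsCubic.iso (φ : G ≃g G') (h : IsCubic G) : IsCubic G' := fun v ↦ by
  rw [← h (φ.symm v)]
  exact Set.ncard_congr' (φ.symm.mapNeighborSet v)

theorem dist_le_dist_deleteVertex {v : V} (h : (deleteVertex G v).Connected)
    (a b : {u : V // u ≠ v}) : G.dist a b ≤ (deleteVertex G v).dist a b :=
  dist_map_le (Embedding.induce _).toHom (h a b)

theorem sum_eq_add_sum_ne {M : Type*} [AddCommMonoid M] [Fintype V] (v : V) (f : V → M) :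
    ∑ u, f u = f v + ∑ u : {u : V // u ≠ v}, f u := by
  classical
  rw [Fintype.sum_eq_add_sum_subtype_ne f v]
  congr!

theorem wiener_le_wiener_deleteVertex_add [Fintype V] (hG : G.Connected) {v : V}
    (h : (deleteVertex G v).Connected) :
    wiener G ≤ wiener (deleteVertex G v) + Fintype.card V ^ 2 := by
  have hsplit : ∑ u, ∑ w, G.dist u w = ∑ w, G.dist v w + (∑ u : {u // u ≠ v}, G.dist u v +
      ∑ u : {u // u ≠ v}, ∑ w : {w // w ≠ v}, G.dist u w) := by
    simp_rw [sum_eq_add_sum_ne v fun u ↦ ∑ w, G.dist u w, ← sum_add_distrib,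
      sum_eq_add_sum_ne v (G.dist _)]
  have hv : ∑ w, G.dist v w ≤ Fintype.card V ^ 2 := by
    simpa [sq] using sum_le_card_nsmul univ _ _ fun w _ ↦ (dist_lt_card hG v w).le
  have hv' : ∑ u : {u // u ≠ v}, G.dist u v ≤ ∑ w, G.dist v w := by
    rw [sum_eq_add_sum_ne v]
    exact (sum_congr rfl fun _ _ ↦ dist_comm).trans_le (Nat.le_add_left _ _)
  have hrest : ∑ u : {u // u ≠ v}, ∑ w : {w // w ≠ v}, G.dist u w ≤
      2 * wiener (deleteVertex G v) :=
    (sum_le_sum fun u _ ↦ sum_le_sum fun w _ ↦ dist_le_dist_deleteVertex h u w).trans_eq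
      (two_mul_wiener _).symm
  have := two_mul_wiener G
  lia

end Wiener

/-! ### Gluing along two edges -/

section Glue

variable {C T : Type*} {H : SimpleGraph C} {K : SimpleGraph T} {x y : C} {s t : T}

/-- The disjoint union of `H` and `K` together with the two edges `xs` and `yt`. -/
def glue (H : SimpleGraph C) (K : SimpleGraph T) (x y : C) (s t : T) : SimpleGraph (C ⊕ T) :=
  (H ⊕g K) ⊔ edge (.inl x) (.inr s) ⊔ edge (.inl y) (.inr t)

@[simp]
theorem glue_adj_inl_inl {a b : C} :
    (glue H K x y s t).Adj (.inl a) (.inl b) ↔ H.Adj a b := by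
  simp [glue, edge_adj]

@[simp]
theorem glue_adj_inr_inr {a b : T} :
    (glue H K x y s t).Adj (.inr a) (.inr b) ↔ K.Adj a b := by
  simp [glue, edge_adj]

@[simp]
theorem glue_adj_inl_inr {a : C} {b : T} :
    (glue H K x y s t).Adj (.inl a) (.inr b) ↔ a = x ∧ b = s ∨ a = y ∧ b = t := by
  simp [glue, edge_adj, eq_comm]

@[simp]
theorem glue_adj_inr_inl {a : C} {b : T} :
    (glue H K x y s t).Adj (.inr b) (.inl a) ↔ a = x ∧ b = s ∨ a = y ∧ b = t := by
  rw [adj_comm, glue_adj_inl_inr]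

/-- Gluing is symmetric in its two arguments. -/
def glueSwap : glue H K x y s t ≃g glue K H s t x y where
  toEquiv := Equiv.sumComm C T
  map_rel_iff' := by rintro (a | a) (b | b) <;> simp [and_comm]

theorem glue_connected (hH : H.Connected) (hK : K.Connected) : (glue H K x y s t).Connected :=
  (hH.sum_sup_edge hK).mono le_sup_left

/-- The distance from `inl c` in `glue H K x y s t`: a path to `inr τ` enters `K` either through
the edge `xs` or through the edge `yt`. -/
noncomputable def glueDist (H : SimpleGraph C) (K : SimpleGraph T) (x y : C) (s t : T) (c : C) :
    C ⊕ T → ℕ :=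
  Sum.elim (H.dist c) fun τ ↦ 1 + min (H.dist c x + K.dist s τ) (H.dist c y + K.dist t τ)

theorem glueDist_le_add_one_of_adj (hH : H.Connected) (hxy : H.dist x y ≤ K.dist s t + 2) (c : C)
    {u w : C ⊕ T} (h : (glue H K x y s t).Adj u w) :
    glueDist H K x y s t c w ≤ glueDist H K x y s t c u + 1 := by
  have hx := hH.dist_triangle (u := c) (v := y) (w := x)
  have hy := hH.dist_triangle (u := c) (v := x) (w := y)
  rw [H.dist_comm (u := y)] at hx
  obtain a | a := u <;> obtain b | b := w <;> simp only [glueDist, Sum.elim_inl, Sum.elim_inr]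
  · exact dist_le_dist_add_one_of_adj (glue_adj_inl_inl.1 h) c
  · obtain ⟨rfl, rfl⟩ | ⟨rfl, rfl⟩ := glue_adj_inl_inr.1 h <;> rw [dist_self] <;> lia
  · obtain ⟨rfl, rfl⟩ | ⟨rfl, rfl⟩ := glue_adj_inr_inl.1 h <;> rw [dist_self]
    · rw [K.dist_comm]; lia
    · lia
  · have hs := dist_le_dist_add_one_of_adj (glue_adj_inr_inr.1 h) s
    have ht := dist_le_dist_add_one_of_adj (glue_adj_inr_inr.1 h) t
    lia

theorem exists_adj_glueDist_add_one_eq (hH : H.Connected) (hK : K.Connected) (c : C) (w : C ⊕ T)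
    (hw : glueDist H K x y s t c w ≠ 0) :
    ∃ w', (glue H K x y s t).Adj w w' ∧
      glueDist H K x y s t c w' + 1 = glueDist H K x y s t c w := by
  obtain a | τ := w
  · have hca : c ≠ a := fun h ↦ hw (h ▸ SimpleGraph.dist_self)
    obtain ⟨b, hab, hb⟩ := exists_adj_dist_add_one_eq (hH c a) hca
    exact ⟨.inl b, glue_adj_inl_inl.2 hab, hb⟩
  simp only [glueDist, Sum.elim_inr]
  rcases le_total (H.dist c x + K.dist s τ) (H.dist c y + K.dist t τ) with hle | hle
  · obtain rfl | hne := eq_or_ne s τ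
    · exact ⟨.inl x, by simp, by rw [Sum.elim_inl, min_eq_left hle, SimpleGraph.dist_self]; lia⟩
    · obtain ⟨σ, hadj, hσ⟩ := exists_adj_dist_add_one_eq (hK s τ) hne
      have ht := dist_le_dist_add_one_of_adj hadj.symm t
      exact ⟨.inr σ, by simpa, by rw [Sum.elim_inr]; lia⟩
  · obtain rfl | hne := eq_or_ne t τ
    · exact ⟨.inl y, by simp, by rw [Sum.elim_inl, min_eq_right hle, SimpleGraph.dist_self]; lia⟩
    · obtain ⟨σ, hadj, hσ⟩ := exists_adj_dist_add_one_eq (hK t τ) hne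
      have hs := dist_le_dist_add_one_of_adj hadj.symm s
      exact ⟨.inr σ, by simpa, by rw [Sum.elim_inr]; lia⟩

theorem glue_dist_inl (hH : H.Connected) (hK : K.Connected) (hxy : H.dist x y ≤ K.dist s t + 2)
    (c : C) (w : C ⊕ T) : (glue H K x y s t).dist (.inl c) w = glueDist H K x y s t c w := by
  have hzero (w : C ⊕ T) : glueDist H K x y s t c w = 0 ↔ w = .inl c ∨ w = .inl c := by
    obtain a | τ := w <;> simp [glueDist, hH.dist_eq_zero_iff, eq_comm]
  simpa using min_dist_eq_of_potential (glue_connected hH hK) hzero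
    (fun _ _ ↦ glueDist_le_add_one_of_adj hH hxy c) (exists_adj_glueDist_add_one_eq hH hK c) w

theorem glue_dist_inl_inl (hH : H.Connected) (hK : K.Connected)
    (hxy : H.dist x y ≤ K.dist s t + 2) (a b : C) :
    (glue H K x y s t).dist (.inl a) (.inl b) = H.dist a b :=
  glue_dist_inl hH hK hxy a _

theorem glue_dist_inr_inr (hH : H.Connected) (hK : K.Connected)
    (hst : K.dist s t ≤ H.dist x y + 2) (a b : T) :
    (glue H K x y s t).dist (.inr a) (.inr b) = K.dist a b := by
  rw [← dist_map_iso glueSwap]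
  exact glue_dist_inl_inl hK hH hst a b

theorem wiener_glue [Fintype C] [Fintype T] (hH : H.Connected) (hK : K.Connected)
    (hxy : H.dist x y ≤ K.dist s t + 2) (hst : K.dist s t ≤ H.dist x y + 2) :
    wiener (glue H K x y s t) = wiener H + wiener K +
      ∑ c, ∑ τ, (1 + min (H.dist c x + K.dist s τ) (H.dist c y + K.dist t τ)) := by
  have hcomm : ∑ τ, ∑ c, (glue H K x y s t).dist (.inr τ) (.inl c) =
      ∑ c, ∑ τ, (glue H K x y s t).dist (.inl c) (.inr τ) :=
    sum_comm.trans (sum_congr rfl fun _ _ ↦ sum_congr rfl fun _ _ ↦ dist_comm)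
  have hG := two_mul_wiener (glue H K x y s t)
  simp only [Fintype.sum_sum_type, sum_add_distrib (f := fun _ ↦ ∑ _, _), hcomm,
    glue_dist_inr_inr hH hK hst, glue_dist_inl hH hK hxy, glueDist, Sum.elim_inl, Sum.elim_inr,
    ← two_mul_wiener] at hG
  lia

/-- Deleting a vertex of `H` other than `x` and `y` commutes with gluing. -/
def deleteVertexGlueIso {v : C} (hx : x ≠ v) (hy : y ≠ v) :
    deleteVertex (glue H K x y s t) (.inl v) ≃g
      glue (deleteVertex H v) K ⟨x, hx⟩ ⟨y, hy⟩ s t where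
  toFun
    | ⟨.inl c, h⟩ => .inl ⟨c, fun h' ↦ h (h' ▸ rfl)⟩
    | ⟨.inr τ, _⟩ => .inr τ
  invFun
    | .inl c => ⟨.inl c, fun h ↦ c.2 (Sum.inl.inj h)⟩
    | .inr τ => ⟨.inr τ, Sum.inr_ne_inl⟩
  left_inv := by rintro ⟨a | a, h⟩ <;> rfl
  right_inv := by rintro (a | a) <;> rfl
  map_rel_iff' := by rintro ⟨a | a, ha⟩ ⟨b | b, hb⟩ <;> simp [deleteVertex]

/-- Extends an automorphism of `H` fixing `x` and `y` by the identity of `K`. -/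
def glueAut (φ : H ≃g H) (hx : φ x = x) (hy : φ y = y) :
    glue H K x y s t ≃g glue H K x y s t where
  toEquiv := φ.toEquiv.sumCongr (Equiv.refl T)
  map_rel_iff' := by
    rintro (a | a) (b | b) <;>
      simp [φ.injective.eq_iff' hx, φ.injective.eq_iff' hy, φ.map_adj_iff]

end Glue

section Twins

variable {C T : Type*} {H : SimpleGraph C} {K : SimpleGraph T} {x y v : C} {s t : T}

theorem dist_eq_dist_of_neighborSet_eq (hH : H.Connected)
    (htwin : H.neighborSet x = H.neighborSet y) {c : C} (hcx : c ≠ x) (hcy : c ≠ y) :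
    H.dist c x = H.dist c y := by
  obtain ⟨a, hxa, ha⟩ := exists_adj_dist_add_one_eq (hH c x) hcx
  obtain ⟨b, hyb, hb⟩ := exists_adj_dist_add_one_eq (hH c y) hcy
  have hya : H.Adj y a := htwin.subset hxa
  have hxb : H.Adj x b := htwin.superset hyb
  have := dist_le_dist_add_one_of_adj hya.symm c
  have := dist_le_dist_add_one_of_adj hxb.symm c
  lia

theorem dist_eq_two_of_neighborSet_eq (hH : H.Connected)
    (htwin : H.neighborSet x = H.neighborSet y) (hxy : x ≠ y) : H.dist x y = 2 := by
  obtain ⟨a, hxa, -⟩ := exists_adj_dist_add_one_eq (hH y x) hxy.symm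
  have hya : H.Adj y a := htwin.subset hxa
  have hnadj : ¬ H.Adj x y := fun h ↦ H.irrefl (htwin.superset h.symm : H.Adj x x)
  exact (dist_le (.cons hxa (.cons hya.symm .nil))).antisymm
    (hH.one_lt_dist_of_ne_of_not_adj hxy hnadj)

theorem neighborSet_deleteVertex_eq (htwin : H.neighborSet x = H.neighborSet y) (hx : x ≠ v)
    (hy : y ≠ v) :
    (deleteVertex H v).neighborSet ⟨x, hx⟩ = (deleteVertex H v).neighborSet ⟨y, hy⟩ :=
  Set.ext fun z ↦ (Set.ext_iff.1 htwin z :)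

/-- The total increase of the distances to `x` caused by the deletion of `v`. -/
noncomputable def detour [Fintype C] (H : SimpleGraph C) (hx : x ≠ v) : ℕ :=
  ∑ c : {c : C // c ≠ v}, ((deleteVertex H v).dist c ⟨x, hx⟩ - H.dist c x)

theorem dist_deleteVertex_twin (hH : H.Connected) (hHv : (deleteVertex H v).Connected)
    (htwin : H.neighborSet x = H.neighborSet y) (hxy : x ≠ y) (hx : x ≠ v) (hy : y ≠ v)
    (c : {c : C // c ≠ v}) :
    (deleteVertex H v).dist c ⟨y, hy⟩ =
      H.dist c y + ((deleteVertex H v).dist c ⟨x, hx⟩ - H.dist c x) := by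
  have htwin' := neighborSet_deleteVertex_eq htwin hx hy
  have hxy' : (⟨x, hx⟩ : {c : C // c ≠ v}) ≠ ⟨y, hy⟩ := fun h ↦ hxy (congrArg Subtype.val h)
  have hle := dist_le_dist_deleteVertex hHv c ⟨x, hx⟩
  obtain rfl | hcx := eq_or_ne c ⟨x, hx⟩
  · simp [dist_eq_two_of_neighborSet_eq hHv htwin' hxy', dist_eq_two_of_neighborSet_eq hH htwin hxy]
  obtain rfl | hcy := eq_or_ne c ⟨y, hy⟩
  · simp [dist_eq_two_of_neighborSet_eq hHv htwin'.symm hxy'.symm,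
      dist_eq_two_of_neighborSet_eq hH htwin.symm hxy.symm]
  rw [← dist_eq_dist_of_neighborSet_eq hHv htwin' hcx hcy,
    ← dist_eq_dist_of_neighborSet_eq hH htwin (fun h ↦ hcx (Subtype.ext h))
      (fun h ↦ hcy (Subtype.ext h))]
  exact (Nat.add_sub_cancel' hle).symm

theorem wiener_deleteVertex_glue [Fintype C] [Fintype T] (hH : H.Connected)
    (hHv : (deleteVertex H v).Connected) (hK : K.Connected)
    (htwin : H.neighborSet x = H.neighborSet y) (hxy : x ≠ y) (hx : x ≠ v) (hy : y ≠ v)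
    (hst : K.dist s t ≤ 4) :
    wiener (deleteVertex (glue H K x y s t) (.inl v)) + wiener H +
        ∑ τ, (1 + H.dist v x + min (K.dist s τ) (K.dist t τ)) =
      wiener (glue H K x y s t) + wiener (deleteVertex H v) + Fintype.card T * detour H hx := by
  have hxy' : (⟨x, hx⟩ : {c : C // c ≠ v}) ≠ ⟨y, hy⟩ := fun h ↦ hxy (congrArg Subtype.val h)
  have hd := dist_eq_two_of_neighborSet_eq hH htwin hxy
  have hd' := dist_eq_two_of_neighborSet_eq hHv (neighborSet_deleteVertex_eq htwin hx hy) hxy'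
  have hcross (c : {c : C // c ≠ v}) (τ : T) :
      1 + min ((deleteVertex H v).dist c ⟨x, hx⟩ + K.dist s τ)
          ((deleteVertex H v).dist c ⟨y, hy⟩ + K.dist t τ) =
        1 + min (H.dist c x + K.dist s τ) (H.dist c y + K.dist t τ) +
          ((deleteVertex H v).dist c ⟨x, hx⟩ - H.dist c x) := by
    have hle := dist_le_dist_deleteVertex hHv c ⟨x, hx⟩
    rw [dist_deleteVertex_twin hH hHv htwin hxy hx hy c]
    lia
  rw [wiener_congr (deleteVertexGlueIso hx hy), wiener_glue hH hK (by lia) (by lia),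
    wiener_glue hHv hK (by lia) (by lia), sum_eq_add_sum_ne v]
  simp_rw [hcross, sum_add_distrib (f := fun _ ↦ _ + min _ _),
    ← dist_eq_dist_of_neighborSet_eq hH htwin hx.symm hy.symm, ← Nat.add_min_add_left, add_assoc]
  rw [sum_add_distrib (f := fun _ ↦ ∑ _, _), detour, mul_sum]
  simp only [sum_const, card_univ, smul_eq_mul]
  lia

theorem isSoltes_glue [Fintype C] [Fintype T] (hH : H.Connected)
    (hHv : (deleteVertex H v).Connected) (hK : K.Connected)
    (htwin : H.neighborSet x = H.neighborSet y) (hxy : x ≠ y) (hx : x ≠ v) (hy : y ≠ v)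
    (hst : K.dist s t ≤ 4)
    (hbalance : wiener (deleteVertex H v) + Fintype.card T * detour H hx =
      wiener H + Fintype.card T * (1 + H.dist v x) + ∑ τ, min (K.dist s τ) (K.dist t τ)) :
    IsSoltes (glue H K x y s t) (.inl v) := by
  refine ⟨(deleteVertexGlueIso hx hy).connected_iff.2 (glue_connected hHv hK), ?_⟩
  have hW := wiener_deleteVertex_glue hH hHv hK htwin hxy hx hy hst
  simp only [sum_add_distrib (f := fun _ ↦ 1 + _), sum_const, card_univ, smul_eq_mul] at hW
  lia

end Twins

/-! ### Two-connectivity from st-numberings -/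

section StNumbering

variable {V C T α β : Type*} [LinearOrder α] [LinearOrder β] {G : SimpleGraph V} {s t : V}
  {f : V → α}

/-- `f` is an st-numbering of `G` with values in a linear order (ties are allowed): every vertex
except the source `s` has a lower neighbour and every vertex except the sink `t` has a higher
one. -/
def IsStNumbering (G : SimpleGraph V) (s t : V) (f : V → α) : Prop :=
  ∀ w, (w ≠ s → ∃ w', G.Adj w w' ∧ f w' < f w) ∧ (w ≠ t → ∃ w', G.Adj w w' ∧ f w < f w')

theorem IsStNumbering.dual (h : IsStNumbering G s t f) :
    IsStNumbering G t s (OrderDual.toDual ∘ f) :=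
  fun w ↦ (h w).symm

theorem IsStNumbering.connected [Finite V] (h : IsStNumbering G s t f) : G.Connected := by
  refine connected_iff_exists_forall_reachable G |>.2 ⟨s, fun w ↦ Reachable.symm ?_⟩
  induction w using (Finite.wellFounded_of_trans_of_irrefl (f ⁻¹'o (· < ·))).induction with
  | _ w ih =>
    by_cases hw : w = s
    · rw [hw]
    · obtain ⟨w', hadj, hlt⟩ := (h w).1 hw
      exact hadj.reachable.trans (ih w' hlt)

theorem IsStNumbering.reachable_source_of_le [Finite V] (h : IsStNumbering G s t f) {v w : V}
    (hwv : w ≠ v) (hle : f w ≤ f v) :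
    ∃ hs : s ≠ v, (deleteVertex G v).Reachable ⟨w, hwv⟩ ⟨s, hs⟩ := by
  induction w using (Finite.wellFounded_of_trans_of_irrefl (f ⁻¹'o (· < ·))).induction with
  | _ w ih =>
    by_cases hw : w = s
    · subst hw
      exact ⟨hwv, .rfl⟩
    · obtain ⟨w', hadj, hlt⟩ := (h w).1 hw
      have hwv' : w' ≠ v := by rintro rfl; exact hlt.not_ge hle
      obtain ⟨hs, hr⟩ := ih w' hlt hwv' (hlt.le.trans hle)
      have hadj' : (deleteVertex G v).Adj ⟨w, hwv⟩ ⟨w', hwv'⟩ := hadj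
      exact ⟨hs, hadj'.reachable.trans hr⟩

theorem IsStNumbering.reachable_source_or_sink [Finite V] (h : IsStNumbering G s t f) {v w : V}
    (hwv : w ≠ v) :
    (∃ hs : s ≠ v, (deleteVertex G v).Reachable ⟨w, hwv⟩ ⟨s, hs⟩) ∨
      ∃ ht : t ≠ v, (deleteVertex G v).Reachable ⟨w, hwv⟩ ⟨t, ht⟩ :=
  (le_total (f w) (f v)).imp (h.reachable_source_of_le hwv) (h.dual.reachable_source_of_le hwv)

theorem IsStNumbering.deleteVertex_connected [Finite V] [Nontrivial V]
    (h : IsStNumbering G s t f) {v : V}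
    (hst : ∀ (hs : s ≠ v) (ht : t ≠ v), (deleteVertex G v).Reachable ⟨s, hs⟩ ⟨t, ht⟩) :
    (deleteVertex G v).Connected := by
  have : Nonempty {u : V // u ≠ v} := nonempty_subtype.2 (exists_ne v)
  refine connected_iff _ |>.2 ⟨fun ⟨a, ha⟩ ⟨b, hb⟩ ↦ ?_, this⟩
  obtain ⟨hs, has⟩ | ⟨ht, hat⟩ := h.reachable_source_or_sink ha <;>
    obtain ⟨hs', hbs⟩ | ⟨ht', hbt⟩ := h.reachable_source_or_sink hb
  · exact has.trans hbs.symm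
  · exact has.trans ((hst hs ht').trans hbt.symm)
  · exact hat.trans ((hst hs' ht).symm.trans hbs.symm)
  · exact hat.trans hbt.symm

variable {H : SimpleGraph C} {K : SimpleGraph T} {x y : C} {a b : T} {p : C → α} {q : T → β}

/- All of `H` is inserted immediately above `a`, so that the edges `a x` and `y b` both point
upwards. -/
theorem isStNumbering_glue (hH : IsStNumbering H x y p) (hK : IsStNumbering K a b q)
    (hab : q a < q b) :
    IsStNumbering (glue H K x y a b) (.inr a) (.inr b)
      (Sum.elim (fun c ↦ toLex (q a, (p c : WithBot α))) fun τ ↦ toLex (q τ, ⊥)) := by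
  rintro (c | τ)
  · refine ⟨fun _ ↦ ?_, fun _ ↦ ?_⟩
    · obtain rfl | hc := eq_or_ne c x
      · exact ⟨.inr a, by simp, by simp [Prod.Lex.toLex_lt_toLex]⟩
      · obtain ⟨c', hadj, hlt⟩ := (hH c).1 hc
        exact ⟨.inl c', by simpa, by simpa [Prod.Lex.toLex_lt_toLex]⟩
    · obtain rfl | hc := eq_or_ne c y
      · exact ⟨.inr b, by simp, by simp [Prod.Lex.toLex_lt_toLex, hab]⟩
      · obtain ⟨c', hadj, hlt⟩ := (hH c).2 hc
        exact ⟨.inl c', by simpa, by simpa [Prod.Lex.toLex_lt_toLex]⟩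
  · refine ⟨fun hτ ↦ ?_, fun hτ ↦ ?_⟩
    · obtain ⟨σ, hadj, hlt⟩ := (hK τ).1 fun h ↦ hτ (congrArg _ h)
      exact ⟨.inr σ, by simpa, by simp [Prod.Lex.toLex_lt_toLex, hlt]⟩
    · obtain ⟨σ, hadj, hlt⟩ := (hK τ).2 fun h ↦ hτ (congrArg _ h)
      exact ⟨.inr σ, by simpa, by simp [Prod.Lex.toLex_lt_toLex, hlt]⟩

theorem twoConnected_glue [Fintype C] [Fintype T] (hH : IsStNumbering H x y p)
    (hK : IsStNumbering K a b q) (hab : q a < q b) : TwoConnected (glue H K x y a b) := by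
  have hG := isStNumbering_glue hH hK hab
  have : Nonempty C := ⟨x⟩
  have : Nontrivial T := ⟨a, b, by rintro rfl; exact hab.false⟩
  have : Nontrivial (C ⊕ T) := Sum.inr_injective.nontrivial
  refine ⟨hG.connected, ?_, fun v ↦ hG.deleteVertex_connected fun ha hb ↦ ?_⟩
  · have := Fintype.card_pos (α := C)
    have := Fintype.one_lt_card (α := T)
    rw [Fintype.card_sum]
    lia
  obtain c | τ := v
  · let φ : K →g deleteVertex (glue H K x y a b) (.inl c) :=
      ⟨fun σ ↦ ⟨.inr σ, Sum.inr_ne_inl⟩, glue_adj_inr_inr.2⟩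
    exact (hK.connected a b).map φ
  · let φ : H →g deleteVertex (glue H K x y a b) (.inr τ) :=
      ⟨fun c ↦ ⟨.inl c, Sum.inl_ne_inr⟩, glue_adj_inl_inl.2⟩
    have hax : (deleteVertex (glue H K x y a b) (.inr τ)).Adj ⟨.inr a, ha⟩ (φ x) :=
      glue_adj_inr_inl.2 (.inl ⟨rfl, rfl⟩)
    have hyb : (deleteVertex (glue H K x y a b) (.inr τ)).Adj (φ y) ⟨.inr b, hb⟩ :=
      glue_adj_inl_inr.2 (.inr ⟨rfl, rfl⟩)
    exact hax.reachable.trans (((hH.connected x y).map φ).trans hyb.reachable)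

end StNumbering

section Cubic

variable {C T : Type*} {H : SimpleGraph C} {K : SimpleGraph T} {x y : C} {s t : T}

/-- `x` and `y` are distinct vertices of degree two and all other vertices have degree three, so
that attaching one edge at `x` and one at `y` makes the graph cubic. -/
def IsCubicExcept (H : SimpleGraph C) (x y : C) : Prop :=
  x ≠ y ∧ (H.neighborSet x).ncard = 2 ∧ (H.neighborSet y).ncard = 2 ∧
    ∀ c, c ≠ x → c ≠ y → (H.neighborSet c).ncard = 3

theorem ncard_neighborSet_glue_inl [Finite C] (hH : IsCubicExcept H x y) (c : C) :
    ((glue H K x y s t).neighborSet (.inl c)).ncard = 3 := by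
  obtain ⟨hxy, hx, hy, hother⟩ := hH
  have hinr (σ : T) : (.inr σ : C ⊕ T) ∉ Sum.inl '' H.neighborSet c := by simp
  obtain rfl | hcx := eq_or_ne c x
  · have : (glue H K c y s t).neighborSet (.inl c) = insert (.inr s) (.inl '' H.neighborSet c) := by
      ext (a | σ) <;> simp [hxy]
    rw [this, Set.ncard_insert_of_notMem (hinr s),
      Set.ncard_image_of_injective _ Sum.inl_injective, hx]
  obtain rfl | hcy := eq_or_ne c y
  · have : (glue H K x c s t).neighborSet (.inl c) = insert (.inr t) (.inl '' H.neighborSet c) := by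
      ext (a | σ) <;> simp [hcx]
    rw [this, Set.ncard_insert_of_notMem (hinr t),
      Set.ncard_image_of_injective _ Sum.inl_injective, hy]
  · have : (glue H K x y s t).neighborSet (.inl c) = .inl '' H.neighborSet c := by
      ext (a | σ) <;> simp [hcx, hcy]
    rw [this, Set.ncard_image_of_injective _ Sum.inl_injective, hother c hcx hcy]

theorem isCubic_glue [Finite C] [Finite T] (hH : IsCubicExcept H x y) (hK : IsCubicExcept K s t) :
    IsCubic (glue H K x y s t)
  | .inl c => ncard_neighborSet_glue_inl hH c
  | .inr τ => by
    rw [Set.ncard_congr' (glueSwap.mapNeighborSet (.inr τ))]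
    exact ncard_neighborSet_glue_inl hK τ

end Cubic

/-! ### The tail -/

/-- The vertices of `tail L i b`: two rails of length `L` and two extra vertices. -/
inductive TailVertex (L : ℕ) : Type
  | rail (k : Fin (L + 1)) (e : Bool)
  | extra (κ : Bool)

namespace TailVertex

/-- The vertices of the tail as a disjoint union. -/
def equivSum (L : ℕ) : (Fin (L + 1) × Bool) ⊕ Bool ≃ TailVertex L where
  toFun
    | .inl (k, e) => rail k e
    | .inr κ => extra κ
  invFun
    | rail k e => .inl (k, e)
    | extra κ => .inr κ
  left_inv := by rintro (_ | _) <;> rfl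
  right_inv := by rintro (_ | _) <;> rfl

instance instFintype (L : ℕ) : Fintype (TailVertex L) := Fintype.ofEquiv _ (equivSum L)

theorem card_eq (L : ℕ) : Fintype.card (TailVertex L) = 2 * L + 4 := by
  rw [← Fintype.card_congr (equivSum L), Fintype.card_sum, Fintype.card_prod, Fintype.card_fin,
    Fintype.card_bool]
  lia

/-- The distance from the nearer of the two ends of `tail L i b`. -/
def level (i : ℕ) (b : Bool) {L : ℕ} : TailVertex L → ℕ
  | rail k _ => k
  | extra κ => i + 1 + if b && κ then 1 else 0

theorem sum_level (L i : ℕ) (b : Bool) :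
    ∑ u : TailVertex L, level i b u = L * (L + 1) + 2 * i + 2 + if b then 1 else 0 := by
  have hgauss := Finset.sum_range_id_mul_two (L + 1)
  rw [← (equivSum L).sum_comp, Fintype.sum_sum_type, Fintype.sum_prod_type_right]
  simp only [equivSum, Equiv.coe_fn_mk, level, Fintype.sum_bool,
    Fin.sum_univ_eq_sum_range (fun k ↦ k), Bool.and_true, Bool.and_false, Bool.false_eq_true,
    if_false]
  rw [Nat.add_sub_cancel] at hgauss
  lia

end TailVertex

section Tail

open TailVertex

variable {L i : ℕ} {b : Bool}

/-- The edges of `tail L i b`, each listed in at least one direction: a ladder whose rungs at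
the levels `i`, `i + 1` and `L - 1` are missing, the last two levels being completely joined. The
two extra vertices are adjacent and replace the rungs at the levels `i` and `i + 1`, either one
extra vertex for each level (`b = true`) or one for each rail (`b = false`). -/
def tailRel (L i : ℕ) (b : Bool) : TailVertex L → TailVertex L → Prop
  | rail k e, rail k' e' =>
    (k : ℕ) + 1 = k' ∧ (e = e' ∨ (k' : ℕ) = L) ∨
      k = k' ∧ (k : ℕ) ≠ i ∧ (k : ℕ) ≠ i + 1 ∧ (k : ℕ) + 1 ≠ L
  | rail k e, extra κ =>
    ((k : ℕ) = i ∨ (k : ℕ) = i + 1) ∧ κ = if b then decide ((k : ℕ) = i + 1) else e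
  | extra _, rail _ _ => False
  | extra _, extra _ => True

/-- A ladder with `2 * L + 4` vertices, in which all vertices except the two ends `rail 0 _` have
degree three. Varying `i` and `b` changes only the level of the extra vertices. -/
def tail (L i : ℕ) (b : Bool) : SimpleGraph (TailVertex L) := fromRel (tailRel L i b)

theorem tail_adj_rail_rail {k k' : Fin (L + 1)} {e e' : Bool} :
    (tail L i b).Adj (rail k e) (rail k' e') ↔
      ((k : ℕ) + 1 = k' ∧ (e = e' ∨ (k' : ℕ) = L) ∨ (k' : ℕ) + 1 = k ∧ (e = e' ∨ (k : ℕ) = L)) ∨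
        k = k' ∧ e ≠ e' ∧ (k : ℕ) ≠ i ∧ (k : ℕ) ≠ i + 1 ∧ (k : ℕ) + 1 ≠ L := by
  simp only [tail, fromRel_adj, tailRel, ne_eq, TailVertex.rail.injEq]
  grind

theorem tail_adj_rail_extra {k : Fin (L + 1)} {e κ : Bool} :
    (tail L i b).Adj (rail k e) (extra κ) ↔
      ((k : ℕ) = i ∨ (k : ℕ) = i + 1) ∧ κ = if b then decide ((k : ℕ) = i + 1) else e := by
  simp [tail, tailRel]

theorem tail_adj_extra_rail {k : Fin (L + 1)} {e κ : Bool} :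
    (tail L i b).Adj (extra κ) (rail k e) ↔
      ((k : ℕ) = i ∨ (k : ℕ) = i + 1) ∧ κ = if b then decide ((k : ℕ) = i + 1) else e := by
  rw [adj_comm, tail_adj_rail_extra]

theorem tail_adj_extra_extra {κ κ' : Bool} : (tail L i b).Adj (extra κ) (extra κ') ↔ κ ≠ κ' := by
  simp [tail, tailRel]

theorem tail_level_le_add_one_of_adj {u w : TailVertex L} (h : (tail L i b).Adj u w) :
    level i b w ≤ level i b u + 1 := by
  obtain ⟨k, e⟩ | κ := u <;> obtain ⟨k', e'⟩ | κ' := w <;>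
    grind [level, tail_adj_rail_rail, tail_adj_rail_extra, tail_adj_extra_rail]

theorem exists_adj_tail_level_add_one_eq (hL : i + 3 ≤ L) (u : TailVertex L)
    (hu : level i b u ≠ 0) :
    ∃ w, (tail L i b).Adj u w ∧ level i b w + 1 = level i b u := by
  obtain ⟨k, e⟩ | κ := u
  · have hk : (k : ℕ) ≠ 0 := hu
    exact ⟨rail ⟨k - 1, by lia⟩ e, by grind [tail_adj_rail_rail], by grind [level]⟩
  · refine ⟨rail ⟨if b && κ then i + 1 else i, by grind⟩ κ, ?_, ?_⟩
    · grind [tail_adj_extra_rail]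
    · grind [level]

/-- The st-numbering of the tail that ascends the rail `false` and descends the rail `true`. -/
def TailVertex.stNumber (i : ℕ) {L : ℕ} : TailVertex L → ℕ
  | rail k e => if e then 2 * L + 1 - k else k
  | extra κ => if κ then L else i + 1

theorem isStNumbering_tail (hL : i + 3 ≤ L) :
    IsStNumbering (tail L i b) (rail 0 false) (rail 0 true) (stNumber i) := by
  rintro (⟨k, _ | _⟩ | _ | _) <;> refine ⟨fun h ↦ ?_, fun h ↦ ?_⟩
  · have hk : (k : ℕ) ≠ 0 := by grind
    exact ⟨rail ⟨k - 1, by lia⟩ false, by grind [tail_adj_rail_rail], by grind [stNumber]⟩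
  · obtain hk | hk := k.is_le.eq_or_lt
    · exact ⟨rail k true, by grind [tail_adj_rail_rail], by grind [stNumber]⟩
    · exact ⟨rail ⟨k + 1, by lia⟩ false, by grind [tail_adj_rail_rail], by grind [stNumber]⟩
  · obtain hk | hk := k.is_le.eq_or_lt
    · exact ⟨rail k false, by grind [tail_adj_rail_rail], by grind [stNumber]⟩
    · exact ⟨rail ⟨k + 1, by lia⟩ true, by grind [tail_adj_rail_rail], by grind [stNumber]⟩
  · have hk : (k : ℕ) ≠ 0 := by grind
    exact ⟨rail ⟨k - 1, by lia⟩ true, by grind [tail_adj_rail_rail], by grind [stNumber]⟩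
  · exact ⟨rail ⟨i, by lia⟩ false, by grind [tail_adj_extra_rail], by grind [stNumber]⟩
  · exact ⟨extra true, by grind [tail_adj_extra_extra], by grind [stNumber]⟩
  · exact ⟨extra false, by grind [tail_adj_extra_extra], by grind [stNumber]⟩
  · exact ⟨rail ⟨i + 1, by lia⟩ true, by grind [tail_adj_extra_rail], by grind [stNumber]⟩

theorem ncard_neighborSet_rail_zero (hi : 1 ≤ i) (hL : i + 3 ≤ L) (e : Bool) :
    ((tail L i b).neighborSet (rail 0 e)).ncard = 2 := by
  refine Set.ncard_eq_two.2 ⟨rail ⟨1, by lia⟩ e, rail 0 (!e), by grind, ?_⟩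
  ext (⟨k', _ | _⟩ | κ) <;> cases e <;>
    grind [mem_neighborSet, tail_adj_rail_rail, tail_adj_rail_extra, Fin.val_zero]

theorem ncard_neighborSet_rail_last (hL : i + 3 ≤ L) (e : Bool) :
    ((tail L i b).neighborSet (rail (Fin.last L) e)).ncard = 3 := by
  refine Set.ncard_eq_three.2 ⟨rail ⟨L - 1, by lia⟩ false, rail ⟨L - 1, by lia⟩ true,
    rail (Fin.last L) (!e), by grind, by grind, by grind, ?_⟩
  ext (⟨k', _ | _⟩ | κ) <;> cases e <;>
    grind [mem_neighborSet, tail_adj_rail_rail, tail_adj_rail_extra]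

theorem ncard_neighborSet_rail_pred_last (hL : i + 3 ≤ L) {k : Fin (L + 1)}
    (hk : (k : ℕ) + 1 = L) (e : Bool) :
    ((tail L i b).neighborSet (rail k e)).ncard = 3 := by
  refine Set.ncard_eq_three.2 ⟨rail ⟨k - 1, by lia⟩ e, rail (Fin.last L) false,
    rail (Fin.last L) true, by grind, by grind, by grind, ?_⟩
  ext (⟨k', _ | _⟩ | κ) <;> cases e <;>
    grind [mem_neighborSet, tail_adj_rail_rail, tail_adj_rail_extra]

theorem ncard_neighborSet_rail_extra (hi : 1 ≤ i) (hL : i + 3 ≤ L) {k : Fin (L + 1)}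
    (hk : (k : ℕ) = i ∨ (k : ℕ) = i + 1) (e : Bool) :
    ((tail L i b).neighborSet (rail k e)).ncard = 3 := by
  refine Set.ncard_eq_three.2 ⟨rail ⟨k - 1, by lia⟩ e, rail ⟨k + 1, by lia⟩ e,
    extra (if b then decide ((k : ℕ) = i + 1) else e), by grind, by grind, by grind, ?_⟩
  ext (⟨k', e'⟩ | κ) <;>
    grind [mem_neighborSet, tail_adj_rail_rail, tail_adj_rail_extra]

theorem ncard_neighborSet_rail_of_rung {k : Fin (L + 1)} (hk : 0 < (k : ℕ)) (hkL : (k : ℕ) + 1 < L)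
    (hki : (k : ℕ) ≠ i) (hki' : (k : ℕ) ≠ i + 1) (e : Bool) :
    ((tail L i b).neighborSet (rail k e)).ncard = 3 := by
  refine Set.ncard_eq_three.2 ⟨rail ⟨k - 1, by lia⟩ e, rail ⟨k + 1, by lia⟩ e,
    rail k (!e), by grind, by grind, by grind, ?_⟩
  ext (⟨k', _ | _⟩ | κ) <;> cases e <;>
    grind [mem_neighborSet, tail_adj_rail_rail, tail_adj_rail_extra]

theorem ncard_neighborSet_extra (hL : i + 3 ≤ L) (κ : Bool) :
    ((tail L i b).neighborSet (extra κ)).ncard = 3 := by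
  cases b
  · refine Set.ncard_eq_three.2 ⟨rail ⟨i, by lia⟩ κ, rail ⟨i + 1, by lia⟩ κ, extra (!κ),
      by grind, by grind, by grind, ?_⟩
    ext (⟨k', e'⟩ | _ | _) <;> cases κ <;>
      grind [mem_neighborSet, tail_adj_extra_rail, tail_adj_extra_extra]
  · refine Set.ncard_eq_three.2 ⟨rail ⟨i + κ.toNat, by grind [Bool.toNat_le]⟩ false,
      rail ⟨i + κ.toNat, by grind [Bool.toNat_le]⟩ true, extra (!κ),
      by grind, by grind, by grind, ?_⟩
    ext (⟨k', _ | _⟩ | _ | _) <;> cases κ <;>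
      grind [mem_neighborSet, tail_adj_extra_rail, tail_adj_extra_extra, Bool.toNat]

theorem isCubicExcept_tail (hi : 1 ≤ i) (hL : i + 3 ≤ L) :
    IsCubicExcept (tail L i b) (rail 0 false) (rail 0 true) := by
  refine ⟨by simp, ncard_neighborSet_rail_zero hi hL _, ncard_neighborSet_rail_zero hi hL _, ?_⟩
  rintro (⟨k, e⟩ | κ) hF hT
  · have hk : 0 < (k : ℕ) := Fin.pos_iff_ne_zero.2 (by cases e <;> grind)
    by_cases hki : (k : ℕ) = i ∨ (k : ℕ) = i + 1
    · exact ncard_neighborSet_rail_extra hi hL hki e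
    rw [not_or] at hki
    obtain hkL | hkL | hkL : (k : ℕ) + 1 < L ∨ (k : ℕ) + 1 = L ∨ k = Fin.last L := by
      grind [Fin.last]
    · exact ncard_neighborSet_rail_of_rung hk hkL hki.1 hki.2 e
    · exact ncard_neighborSet_rail_pred_last hL hkL e
    · rw [hkL]
      exact ncard_neighborSet_rail_last hL e
  · exact ncard_neighborSet_extra hL κ

theorem min_dist_tail (hL : i + 3 ≤ L) (u : TailVertex L) :
    min ((tail L i b).dist (rail 0 false) u) ((tail L i b).dist (rail 0 true) u) = level i b u := by
  refine min_dist_eq_of_potential (isStNumbering_tail hL).connected ?_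
    (fun _ _ ↦ tail_level_le_add_one_of_adj) (exists_adj_tail_level_add_one_eq hL) u
  rintro (⟨k, e⟩ | κ)
  · cases e <;> grind [level, Fin.val_eq_zero_iff]
  · simp [level]

theorem tail_adj_ends (hi : 1 ≤ i) (hL : i + 3 ≤ L) :
    (tail L i b).Adj (rail 0 false) (rail 0 true) := by
  grind [tail_adj_rail_rail, Fin.val_zero]

end Tail

/- For the largest `L` for which the left-hand side is not too small for `i = 1` and `b = false`,
the remaining difference is small enough to be absorbed by `2 * i` and `b`. -/
theorem exists_tail_parameters {w w' β : ℕ} (hβ : 4 ≤ β) (hw : w ≤ w' + β ^ 2) :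
    ∃ (L i : ℕ) (b : Bool), 1 ≤ i ∧ i + 3 ≤ L ∧
      w' + (2 * L + 4) * β = w + (L * (L + 1) + 2 * i + 2 + if b then 1 else 0) := by
  let P (L : ℕ) : Prop := w + L * (L + 1) + 4 ≤ w' + (2 * L + 4) * β
  obtain ⟨L, hL, hPL, hnot⟩ : ∃ L ≥ β, P L ∧ ¬P (L + 1) := by
    by_contra! hstep
    have hP : P (6 * β + w') :=
      Nat.le_induction (by simp only [P]; nlinarith) hstep _ (by lia : β ≤ 6 * β + w')
    simp only [P] at hP
    nlinarith
  simp only [P] at hPL hnot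
  obtain ⟨d, hd⟩ := Nat.exists_eq_add_of_le hPL
  refine ⟨L, d / 2 + 1, decide (d % 2 = 1), by lia, ?_, ?_⟩
  · have : d < 2 * L + 2 - 2 * β := by
      have : d + 2 * β < 2 * L + 2 := by nlinarith
      lia
    lia
  · rw [hd]
    simp only [decide_eq_true_eq]
    split_ifs <;> lia

/-! ### The core -/

/-- The vertices of `core r M`. A node of a binary tree of depth `r` is encoded by the list of the
choices made on the way to it, the last choice first. -/
inductive CoreVertex (r M : ℕ) : Type
  | twin (e : Bool)
  | stem (a : Bool)
  | node (a : Bool) (l : List Bool) (hl : l.length ≤ r)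
  | rung (l : List Bool) (hl : l.length = r) (i : Fin (M + 1)) (e : Bool)

namespace CoreVertex

variable {r M : ℕ}

/-- The vertices of the core as a disjoint union. -/
def equivSum (r M : ℕ) :
    (Bool ⊕ Bool) ⊕ (Bool × {l : List Bool // l.length ≤ r}) ⊕
      (List.Vector Bool r × Fin (M + 1) × Bool) ≃ CoreVertex r M where
  toFun
    | .inl (.inl e) => twin e
    | .inl (.inr a) => stem a
    | .inr (.inl (a, l)) => node a l.1 l.2
    | .inr (.inr (l, i, e)) => rung l.1 l.2 i e
  invFun
    | twin e => .inl (.inl e)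
    | stem a => .inl (.inr a)
    | node a l hl => .inr (.inl (a, ⟨l, hl⟩))
    | rung l hl i e => .inr (.inr (⟨l, hl⟩, i, e))
  left_inv := by rintro ((_ | _) | _ | _) <;> rfl
  right_inv := by rintro (_ | _ | _ | _) <;> rfl

instance (r : ℕ) : Finite {l : List Bool // l.length ≤ r} := List.finite_length_le Bool r

noncomputable instance instFintype (r M : ℕ) : Fintype (CoreVertex r M) :=
  have := Fintype.ofFinite {l : List Bool // l.length ≤ r}
  Fintype.ofEquiv _ (equivSum r M)

theorem card_eq (r M : ℕ) :
    Fintype.card (CoreVertex r M) =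
      4 + 2 * Nat.card {l : List Bool // l.length ≤ r} + 2 ^ r * ((M + 1) * 2) := by
  rw [← Nat.card_eq_fintype_card, ← Nat.card_congr (equivSum r M)]
  simp [Nat.card_sum, Nat.card_prod, add_assoc]

/-- The neighbour of the node `l` of the tree `a` on the side of the root. -/
def parent (a : Bool) : (l : List Bool) → l.length ≤ r → CoreVertex r M
  | [], _ => stem a
  | _ :: l, hl => node a l (Nat.le_of_succ_le hl)

/-- The neighbours of the node `l` of the tree `a` on the side of the leaves. -/
def child (a : Bool) (l : List Bool) (hl : l.length ≤ r) (x : Bool) : CoreVertex r M :=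
  if h : l.length = r then rung l h (if a then Fin.last M else 0) x
  else node a (x :: l) (lt_of_le_of_ne hl h)

/-- The neighbour of `rung l hl i e` on the side of the tree `false`. -/
def prev (l : List Bool) (hl : l.length = r) (i : Fin (M + 1)) (e : Bool) : CoreVertex r M :=
  if i = 0 then node false l hl.le else rung l hl ⟨i - 1, by lia⟩ e

/-- The neighbour of `rung l hl i e` on the side of the tree `true`. -/
def next (l : List Bool) (hl : l.length = r) (i : Fin (M + 1)) (e : Bool) : CoreVertex r M :=
  if h : i = Fin.last M then node true l hl.le else rung l hl ⟨i + 1, by grind⟩ e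

/-- An st-numbering of the core that increases by one along its edges, rungs of the ladders and
the edges between `twin false` and `stem true` or `twin true` and `stem false` excepted. -/
def level : CoreVertex r M → ℕ
  | twin e => if e then 2 * r + M + 6 else 0
  | stem a => if a then 2 * r + M + 5 else 1
  | node a l _ => if a then 2 * r + M + 4 - l.length else l.length + 2
  | rung _ _ i _ => r + 3 + i

end CoreVertex

section Core

open CoreVertex

/-- The edges of `core r M`, each listed in at least one direction. -/
def coreRel {r M : ℕ} : CoreVertex r M → CoreVertex r M → Prop
  | twin _, stem _ => True
  | stem a, node a' l _ => a = a' ∧ l = []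
  | node a l _, node a' l' _ => a = a' ∧ l' ≠ [] ∧ l = l'.tail
  | node a l _, rung l' _ i _ => l = l' ∧ i = if a then Fin.last M else 0
  | rung l _ i e, rung l' _ i' e' => l = l' ∧ (i = i' ∨ e = e' ∧ (i : ℕ) + 1 = i')
  | _, _ => False

/-- Two complete binary trees of depth `r`, corresponding leaves of which are joined by a ladder
with `M + 1` rungs, while the root of either tree is joined through a stem to both of the twins. -/
def core (r M : ℕ) : SimpleGraph (CoreVertex r M) := fromRel coreRel

variable {r M : ℕ}

theorem core_adj_twin {e : Bool} {u : CoreVertex r M} :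
    (core r M).Adj (twin e) u ↔ ∃ a, u = stem a := by
  cases u <;> simp [core, coreRel]

theorem core_adj_stem {a : Bool} {u : CoreVertex r M} :
    (core r M).Adj (stem a) u ↔ (∃ e, u = twin e) ∨ u = node a [] (Nat.zero_le r) := by
  cases u <;> simp [core, coreRel, eq_comm]

theorem core_adj_node {a : Bool} {l : List Bool} {hl : l.length ≤ r} {u : CoreVertex r M} :
    (core r M).Adj (node a l hl) u ↔
      u = parent a l hl ∨ u = child a l hl false ∨ u = child a l hl true := by
  obtain _ | _ | ⟨_, _ | ⟨_ | _, _⟩, _⟩ | ⟨_, _, _, _ | _⟩ := u <;> cases l <;>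
    simp only [core, fromRel_adj, coreRel, parent, child] <;> grind

theorem core_adj_rung {l : List Bool} {hl : l.length = r} {i : Fin (M + 1)} {e : Bool}
    {u : CoreVertex r M} :
    (core r M).Adj (rung l hl i e) u ↔
      u = rung l hl i (!e) ∨ u = prev l hl i e ∨ u = next l hl i e := by
  obtain _ | _ | ⟨_ | _, _, _⟩ | ⟨_, _, _, _ | _⟩ := u <;> cases e <;>
    simp only [core, fromRel_adj, coreRel, prev, next] <;> grind

theorem neighborSet_core_twin (e : Bool) :
    (core r M).neighborSet (twin e) = {stem false, stem true} := by
  ext u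
  simp [core_adj_twin]

theorem isCubicExcept_core : IsCubicExcept (core r M) (twin false) (twin true) := by
  have htwin (e : Bool) : ((core r M).neighborSet (twin e)).ncard = 2 := by
    rw [neighborSet_core_twin, Set.ncard_pair (by simp)]
  refine ⟨by simp, htwin _, htwin _, ?_⟩
  rintro ((_ | _) | a | ⟨a, l, hl⟩ | ⟨l, hl, i, e⟩) hF hT
  · contradiction
  · contradiction
  · refine Set.ncard_eq_three.2 ⟨twin false, twin true, node a [] (Nat.zero_le r),
      by simp, by simp, by simp, ?_⟩
    ext u
    simp [core_adj_stem, or_assoc]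
  · refine Set.ncard_eq_three.2 ⟨parent a l hl, child a l hl false, child a l hl true,
      ?_, ?_, ?_, Set.ext fun u ↦ core_adj_node⟩
    · cases l <;> grind [parent, child]
    · cases l <;> grind [parent, child]
    · grind [child]
  · exact Set.ncard_eq_three.2 ⟨rung l hl i (!e), prev l hl i e, next l hl i e,
      by grind [prev], by grind [next], by grind [prev, next], Set.ext fun u ↦ core_adj_rung⟩

theorem exists_adj_core_level_add_one_eq (u : CoreVertex r M) (hu : u ≠ twin false) :
    ∃ w, (core r M).Adj u w ∧ level w + 1 = level u := by
  obtain (_ | _) | (_ | _) | ⟨_ | _, l, hl⟩ | ⟨l, hl, i, e⟩ := u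
  · contradiction
  · exact ⟨stem true, core_adj_twin.2 ⟨_, rfl⟩, rfl⟩
  · exact ⟨twin false, core_adj_stem.2 (.inl ⟨_, rfl⟩), rfl⟩
  · exact ⟨node true [] _, core_adj_stem.2 (.inr rfl), rfl⟩
  · refine ⟨parent false l hl, core_adj_node.2 (.inl rfl), ?_⟩
    cases l <;> grind [parent, level]
  · refine ⟨child true l hl false, core_adj_node.2 (.inr (.inl rfl)), ?_⟩
    grind [child, level]
  · refine ⟨prev l hl i e, core_adj_rung.2 (.inr (.inl rfl)), ?_⟩
    grind [prev, level]

theorem exists_adj_core_level_eq_add_one (u : CoreVertex r M) (hu : u ≠ twin true) :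
    ∃ w, (core r M).Adj u w ∧ level w = level u + 1 := by
  obtain (_ | _) | (_ | _) | ⟨_ | _, l, hl⟩ | ⟨l, hl, i, e⟩ := u
  · exact ⟨stem false, core_adj_twin.2 ⟨_, rfl⟩, rfl⟩
  · contradiction
  · exact ⟨node false [] _, core_adj_stem.2 (.inr rfl), rfl⟩
  · exact ⟨twin true, core_adj_stem.2 (.inl ⟨_, rfl⟩), rfl⟩
  · refine ⟨child false l hl false, core_adj_node.2 (.inr (.inl rfl)), ?_⟩
    grind [child, level]
  · refine ⟨parent true l hl, core_adj_node.2 (.inl rfl), ?_⟩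
    cases l <;> grind [parent, level]
  · refine ⟨next l hl i e, core_adj_rung.2 (.inr (.inr rfl)), ?_⟩
    grind [next, level]

theorem isStNumbering_core :
    IsStNumbering (core r M) (twin false) (twin true) level := by
  refine fun u ↦ ⟨fun hu ↦ ?_, fun hu ↦ ?_⟩
  · obtain ⟨w, hadj, hw⟩ := exists_adj_core_level_add_one_eq u hu
    exact ⟨w, hadj, by lia⟩
  · obtain ⟨w, hadj, hw⟩ := exists_adj_core_level_eq_add_one u hu
    exact ⟨w, hadj, by lia⟩

theorem core_connected : (core r M).Connected := isStNumbering_core.connected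

theorem core_deleteVertex_connected {v : CoreVertex r M} (hv : ∃ a, v ≠ stem a) :
    (deleteVertex (core r M) v).Connected := by
  have : Nontrivial (CoreVertex r M) := ⟨twin false, twin true, by simp⟩
  refine isStNumbering_core.deleteVertex_connected fun hF hT ↦ ?_
  obtain ⟨a, ha⟩ := hv
  have hFa : (deleteVertex (core r M) v).Adj ⟨_, hF⟩ ⟨_, ha.symm⟩ := core_adj_twin.2 ⟨a, rfl⟩
  have hTa : (deleteVertex (core r M) v).Adj ⟨_, hT⟩ ⟨_, ha.symm⟩ := core_adj_twin.2 ⟨a, rfl⟩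
  exact hFa.reachable.trans hTa.reachable.symm

theorem dist_twin_le_level (u : CoreVertex r M) : (core r M).dist (twin false) u ≤ level u := by
  obtain ⟨z, hz, p, hp⟩ := exists_walk_to_zero_of_descent (G := core r M) (f := level)
    (fun w hw ↦ exists_adj_core_level_add_one_eq w (by rintro rfl; exact hw rfl)) u
  obtain rfl : z = twin false := by
    by_contra hne
    obtain ⟨w, -, hw⟩ := exists_adj_core_level_add_one_eq z hne
    lia
  rw [dist_comm, ← hp]
  exact dist_le p

/-- The potential of the rungs above the leaf `l`, which bounds their distance to the twins from
below once the leaf has been deleted. -/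
def ladderPotential (l : List Bool) : CoreVertex r M → ℕ
  | rung l' _ i _ => if l' = l then M + 1 - i else 0
  | _ => 0

theorem ladderPotential_le_add_one_of_adj {l : List Bool} {hl : l.length ≤ r}
    {u w : CoreVertex r M} (hu : u ≠ node false l hl) (hadj : (core r M).Adj u w) :
    ladderPotential l w ≤ ladderPotential l u + 1 := by
  obtain _ | _ | _ | ⟨l', hl', i, e⟩ := w
  iterate 3 exact Nat.zero_le _
  rw [adj_comm, core_adj_rung] at hadj
  obtain rfl | rfl | rfl := hadj <;> grind [ladderPotential, prev, next]

theorem le_dist_deleteVertex_leaf {l : List Bool} (hl : l.length = r) (i : Fin (M + 1)) (e : Bool) :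
    M + 1 - i ≤ (deleteVertex (core r M) (node false l hl.le)).dist
      ⟨rung l hl i e, nofun⟩ ⟨twin false, nofun⟩ := by
  have hconn := core_deleteVertex_connected (M := M) (v := node false l hl.le) ⟨true, nofun⟩
  have hle := le_add_dist_of_forall_adj_le_add_one
    (f := ladderPotential l ∘ Subtype.val)
    (fun a _ ↦ ladderPotential_le_add_one_of_adj a.2)
    (hconn ⟨twin false, nofun⟩ ⟨rung l hl i e, nofun⟩)
  rw [dist_comm]
  simpa [ladderPotential] using hle

theorem sq_le_detour_leaf {l : List Bool} (hl : l.length = r) {K : ℕ} (hK : r + 3 * K ≤ M) :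
    K ^ 2 ≤ detour (core r M) (v := node false l hl.le) (x := twin false) nofun := by
  let ι : Fin K ↪ {u : CoreVertex r M // u ≠ node false l hl.le} :=
    ⟨fun i ↦ ⟨rung l hl ⟨i, by lia⟩ false, nofun⟩, fun i j h ↦ by simpa [Fin.ext_iff] using h⟩
  calc K ^ 2 = ∑ _i : Fin K, K := by simp [sq]
    _ ≤ ∑ c ∈ univ.map ι, _ := by
        rw [sum_map]
        refine sum_le_sum fun i _ ↦ ?_
        have hfar := le_dist_deleteVertex_leaf hl (⟨i, by lia⟩ : Fin (M + 1)) false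
        have hnear := dist_twin_le_level (rung l hl (⟨i, by lia⟩ : Fin (M + 1)) false)
        rw [dist_comm] at hnear
        simp only [CoreVertex.level] at hnear
        exact (by lia : K ≤ M + 1 - i - (r + 3 + i)).trans (tsub_le_tsub hfar hnear)
    _ ≤ detour (core r M) (v := node false l hl.le) (x := twin false) nofun :=
        sum_le_sum_of_subset (subset_univ _)

theorem exists_core_two_mul_card_le_detour (r N : ℕ) :
    ∃ M, N < Fintype.card (CoreVertex r M) ∧ ∀ (l : List Bool) (hl : l.length = r),
      2 * Fintype.card (CoreVertex r M) ≤
        detour (core r M) (v := node false l hl.le) (x := twin false) nofun := by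
  let n := Nat.card {l : List Bool // l.length ≤ r}
  let c := 8 + 4 * n + 4 * 2 ^ r * (r + 4)
  refine ⟨r + 3 * (c + N), ?_, fun l hl ↦ ?_⟩
  · rw [CoreVertex.card_eq]
    have := Nat.le_mul_of_pos_left ((r + 3 * (c + N) + 1) * 2) (Nat.two_pow_pos r)
    lia
  · refine le_trans ?_ (sq_le_detour_leaf hl le_rfl)
    rw [CoreVertex.card_eq]
    calc 2 * (4 + 2 * n + 2 ^ r * ((r + 3 * (c + N) + 1) * 2))
      _ = (8 + 4 * n) + 4 * 2 ^ r * (r + 1 + 3 * (c + N)) := by ring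
      _ ≤ (8 + 4 * n) * (c + N) + 4 * 2 ^ r * ((r + 4) * (c + N)) := by
          gcongr
          · exact Nat.le_mul_of_pos_right _ (by lia)
          · nlinarith [Nat.le_mul_of_pos_right (r + 1) (by lia : 0 < c + N)]
      _ = c * (c + N) := by ring
      _ ≤ (c + N) ^ 2 := by rw [sq]; gcongr; lia

/-- Switches the choice made at depth `d` whenever `b d` holds. -/
def flipBits (b : ℕ → Bool) : List Bool → List Bool
  | [] => []
  | x :: l => (x ^^ b l.length) :: flipBits b l

theorem length_flipBits (b : ℕ → Bool) (l : List Bool) : (flipBits b l).length = l.length := by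
  induction l with
  | nil => rfl
  | cons x l ih => simp [flipBits, ih]

theorem flipBits_involutive (b : ℕ → Bool) : Function.Involutive (flipBits b) := fun l ↦ by
  induction l with
  | nil => rfl
  | cons x l ih => simp [flipBits, length_flipBits, ih]

theorem flipBits_congr {b b' : ℕ → Bool} {l : List Bool} (h : ∀ d < l.length, b d = b' d) :
    flipBits b l = flipBits b' l := by
  induction l with
  | nil => rfl
  | cons x l ih =>
    rw [flipBits, flipBits, h _ (by simp), ih fun d hd ↦ h d (by rw [List.length_cons]; lia)]

theorem exists_flipBits_eq {l l' : List Bool} (h : l.length = l'.length) :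
    ∃ b, flipBits b l = l' := by
  induction l generalizing l' with
  | nil => exact ⟨fun _ ↦ false, (List.length_eq_zero_iff.1 h.symm).symm⟩
  | cons x l ih =>
    obtain _ | ⟨y, l'⟩ := l'
    · contradiction
    obtain ⟨b, rfl⟩ := ih (Nat.succ.inj h)
    refine ⟨Function.update b l.length (x ^^ y), ?_⟩
    rw [flipBits, Function.update_self, ← Bool.xor_assoc, Bool.xor_self, Bool.false_xor]
    exact congrArg _ (flipBits_congr fun d hd ↦ Function.update_of_ne hd.ne _ _)

theorem tail_flipBits (b : ℕ → Bool) (l : List Bool) :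
    (flipBits b l).tail = flipBits b l.tail := by
  cases l <;> rfl

theorem flipBits_eq_nil {b : ℕ → Bool} {l : List Bool} : flipBits b l = [] ↔ l = [] := by
  cases l <;> simp [flipBits]

namespace CoreVertex

/-- The action of `flipBits b` on the trees and on the ladders of the core. -/
def switch (b : ℕ → Bool) : CoreVertex r M → CoreVertex r M
  | twin e => twin e
  | stem a => stem a
  | node a l hl => node a (flipBits b l) ((length_flipBits b l).trans_le hl)
  | rung l hl i e => rung (flipBits b l) ((length_flipBits b l).trans hl) i e

theorem switch_involutive (b : ℕ → Bool) :
    Function.Involutive (switch b : CoreVertex r M → CoreVertex r M) := by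
  rintro (_ | _ | _ | _) <;> simp [switch, flipBits_involutive b _]

end CoreVertex

theorem coreRel_switch (b : ℕ → Bool) (u w : CoreVertex r M) :
    coreRel (switch b u) (switch b w) ↔ coreRel u w := by
  cases u <;> cases w <;>
    simp [switch, coreRel, tail_flipBits, flipBits_eq_nil, (flipBits_involutive b).injective.eq_iff]

/-- The automorphism of the core induced by `flipBits b`. -/
def coreAut (r M : ℕ) (b : ℕ → Bool) : core r M ≃g core r M where
  toEquiv := (switch_involutive b).toPerm
  map_rel_iff' := by
    simp [core, coreRel_switch, (switch_involutive b).injective.eq_iff]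

end Core

/-! ### The core with its tail -/

section Assembly

open CoreVertex TailVertex

/-- The core with a tail attached to its twins. For suitable parameters the leaves of the tree
`false` are Šoltés vertices. -/
def coreWithTail (r M L i : ℕ) (b : Bool) : SimpleGraph (CoreVertex r M ⊕ TailVertex L) :=
  glue (core r M) (tail L i b) (twin false) (twin true) (rail 0 false) (rail 0 true)

variable {r M L i : ℕ} {b : Bool}

theorem isCubic_coreWithTail (hi : 1 ≤ i) (hL : i + 3 ≤ L) : IsCubic (coreWithTail r M L i b) :=
  isCubic_glue isCubicExcept_core (isCubicExcept_tail hi hL)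

theorem twoConnected_coreWithTail (hL : i + 3 ≤ L) : TwoConnected (coreWithTail r M L i b) :=
  twoConnected_glue isStNumbering_core (isStNumbering_tail hL) <| by
    simp only [stNumber, Fin.val_zero, if_true, Bool.false_eq_true, if_false]
    lia

theorem IsSoltes.coreWithTail_leaf {l l' : List Bool} (hl : l.length = r) (hl' : l'.length = r)
    (h : IsSoltes (coreWithTail r M L i b) (.inl (node false l hl.le))) :
    IsSoltes (coreWithTail r M L i b) (.inl (node false l' hl'.le)) := by
  obtain ⟨c, rfl⟩ := exists_flipBits_eq (hl.trans hl'.symm)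
  exact h.iso (glueAut (coreAut r M c) rfl rfl)

theorem exists_isSoltes_coreWithTail {l : List Bool} (hl : l.length = r)
    (hdetour : 2 * Fintype.card (CoreVertex r M) ≤
      detour (core r M) (v := node false l hl.le) (x := twin false) nofun) :
    ∃ (L i : ℕ) (b : Bool), 1 ≤ i ∧ i + 3 ≤ L ∧
      IsSoltes (coreWithTail r M L i b) (.inl (node false l hl.le)) := by
  have hv := core_deleteVertex_connected (M := M) (v := node false l hl.le) ⟨true, nofun⟩
  have hdist := dist_lt_card core_connected (node false l hl.le) (twin false : CoreVertex r M)
  obtain ⟨β, hβ⟩ := Nat.exists_eq_add_of_le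
    (by lia : 1 + (core r M).dist (node false l hl.le) (twin false) ≤
      detour (core r M) (v := node false l hl.le) (x := twin false) nofun)
  have hcard : Fintype.card (CoreVertex r M) ≤ β := by lia
  have hwiener := (wiener_le_wiener_deleteVertex_add core_connected hv).trans
    (Nat.add_le_add_left (Nat.pow_le_pow_left hcard 2) _)
  obtain ⟨L, i, b, hi, hL, hbalance⟩ :=
    exists_tail_parameters (by rw [CoreVertex.card_eq] at hcard; lia) hwiener
  refine ⟨L, i, b, hi, hL, ?_⟩
  refine isSoltes_glue core_connected hv (isStNumbering_tail hL).connected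
    (by rw [neighborSet_core_twin, neighborSet_core_twin]) (by simp) nofun nofun ?_ ?_
  · rw [dist_eq_one_iff_adj.2 (tail_adj_ends hi hL)]
    simp
  · simp only [min_dist_tail hL, sum_level, TailVertex.card_eq]
    rw [hβ, mul_add]
    lia

end Assembly

/-- For every `r ≥ 1` and every `N` there is a cubic, 2-connected,
connected simple graph on more than `N` vertices with at least `2 ^ r` distinct Šoltés
vertices; hence for every `r ≥ 1` there are infinitely many such graphs. -/
theorem exists_cubic_twoConnected_with_two_pow_soltes_vertices (r : ℕ) (hr : 1 ≤ r) (N : ℕ) :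
    ∃ (n : ℕ) (G : SimpleGraph (Fin n)),
      N < n ∧ G.Connected ∧ IsCubic G ∧ TwoConnected G ∧
      ∃ S : Finset (Fin n), 2 ^ r ≤ S.card ∧ ∀ v ∈ S, IsSoltes G v := by
  obtain ⟨M, hN, hdetour⟩ := exists_core_two_mul_card_le_detour r N
  have hbase : (List.replicate r false).length = r := List.length_replicate
  obtain ⟨L, i, b, hi, hL, hsoltes⟩ := exists_isSoltes_coreWithTail hbase (hdetour _ hbase)
  let φ := (coreWithTail r M L i b).overFinIso rfl
  let leaf : List.Vector Bool r ↪ Fin _ :=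
    ⟨fun l ↦ φ (.inl (.node false l.1 l.2.le)), fun l l' h ↦ Subtype.ext (by simpa using h)⟩
  have h2 : TwoConnected ((coreWithTail r M L i b).overFin rfl) :=
    (twoConnected_coreWithTail hL).iso φ
  refine ⟨_, _, ?_, h2.1, (isCubic_coreWithTail hi hL).iso φ, h2, univ.map leaf, ?_,
    fun v hv ↦ ?_⟩
  · rw [Fintype.card_sum]
    lia
  · simp
  · obtain ⟨l, -, rfl⟩ := Finset.mem_map.1 hv
    exact (hsoltes.coreWithTail_leaf hbase l.2).iso φ
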